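/- Let (X, 𝔅, μ, T) be an ergodic measure-preserving dynamical system and A ∈ 𝔅 with μ(A) > 0, and suppose the return time to A has exponential tails: there exist C > 0 and η ∈ (0,1) with μ(A ∩ {r_A > t}) ≤ C·η^t for all t ∈ ℕ. Let (E_n) be measurable sets with E_n ∩ A = ∅ for all n and with shadows E'_n = (E_n)'_A satisfying 0 < μ(E'_n) and μ(E'_n) → 0. Then μ(E'_n)·r_{E_n} → 0 in μ_{E'_n}-probability: for every ε > 0, μ_{E'_n}({x : r_{E_n}(x) ≥ ε/μ(E'_n)}) → 0 as n → ∞. -/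

import Mathlib

open MeasureTheory Filter Set ProbabilityTheory
open scoped ENNReal Topology ENat

noncomputable section

variable {X : Type*}

/-- The instant of the `i`-th visit (after time `0`) of the orbit of `x` under `T` to `B`,
with the convention that `hitInstant T B x 0 = 0` and the value is `⊤` if there is no
such visit. -/
def hitInstant (T : X → X) (B : Set X) (x : X) : ℕ → ℕ∞
  | 0 => 0
  | (i+1) => sInf {m : ℕ∞ | ∃ n : ℕ, hitInstant T B x i < (n : ℕ∞) ∧ T^[n] x ∈ B ∧ m = (n : ℕ∞)}

/-- The first hitting time `r_B(x) = inf {k ≥ 1 : T^k x ∈ B}` (with value `⊤` if the orbit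
never enters `B`). -/
def hitTime (T : X → X) (B : Set X) (x : X) : ℕ∞ := hitInstant T B x 1

/-- The `i`-th interarrival time (gap between the `i`-th and `(i+1)`-st visits);
`interGap T B 0 x` is the first hitting time `r_B^{(1)}(x)`, and once some
visit fails to occur, all subsequent gaps are `⊤`. -/
def interGap (T : X → X) (B : Set X) (i : ℕ) (x : X) : ℝ≥0∞ :=
  if hitInstant T B x i = ⊤ then ⊤
  else ((hitInstant T B x (i+1) - hitInstant T B x i : ℕ∞) : ℝ≥0∞)

/-- The shadow set `E'_A = ⋃_{k ≥ 0} (A ∩ {r_A > k} ∩ T^{-k} E)` of `E` in `A`. -/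
def shadow (T : X → X) (A E : Set X) : Set X :=
  ⋃ k : ℕ, A ∩ {x | (k : ℕ∞) < hitTime T A x} ∩ (T^[k]) ⁻¹' E

/-- The induced (first-return) map `T_A(x) = T^{r_A(x)}(x)` (junk value `x` if the orbit of
`x` never returns to `A`). -/
def inducedMap (T : X → X) (A : Set X) (x : X) : X :=
  T^[sInf {n : ℕ | 1 ≤ n ∧ T^[n] x ∈ A}] x

/-- The rescaled interarrival process `c · Φ_B : x ↦ (c · r_B^{(i)}(x))_{i ≥ 1}`,
as a random element of `ℕ → ℝ≥0∞`. -/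
def rescaledProcess (T : X → X) (B : Set X) (c : ℝ≥0∞) (x : X) : ℕ → ℝ≥0∞ :=
  fun i => c * interGap T B i x

/-- Convergence in distribution: the laws of the random elements `f n : X → (ℕ → ℝ≥0∞)`
under the measures `P n` converge weakly to `ν` (tested against bounded continuous
real functions, with `ℕ → ℝ≥0∞` carrying the product topology). -/
def ConvInDist [MeasurableSpace X] (P : ℕ → Measure X)
    (f : ℕ → X → (ℕ → ℝ≥0∞)) (ν : Measure (ℕ → ℝ≥0∞)) : Prop :=
  ∀ g : BoundedContinuousFunction (ℕ → ℝ≥0∞) ℝ,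
    Tendsto (fun n => ∫ x, g (f n x) ∂(P n)) atTop (𝓝 (∫ y, g y ∂ν))

end

theorem lt_hitTime_iff {X : Type*} (T : X → X) (B : Set X) (x : X) (k : ℕ) :
    (k : ℕ∞) < hitTime T B x ↔ ∀ j ∈ Set.Icc 1 k, T^[j] x ∉ B := by
  constructor
  · rintro h j ⟨hj1, hjk⟩ hj
    have hle : hitTime T B x ≤ (j : ℕ∞) := by
      simp only [hitTime, hitInstant]
      exact sInf_le ⟨j, by exact_mod_cast hj1, hj, rfl⟩
    have hkj : k < j := by exact_mod_cast h.trans_le hle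
    omega
  · intro h
    have hle : ((k + 1 : ℕ) : ℕ∞) ≤ hitTime T B x := by
      simp only [hitTime, hitInstant]
      refine le_sInf ?_
      rintro m ⟨n, hn, hnB, rfl⟩
      have hn1 : 0 < n := by exact_mod_cast hn
      have hkn : k + 1 ≤ n := by
        by_contra hlt
        exact h n ⟨hn1, by omega⟩ hnB
      exact_mod_cast hkn
    exact lt_of_lt_of_le (by exact_mod_cast k.lt_succ_self) hle

theorem measurableSet_lt_hitTime {X : Type*} [MeasurableSpace X] {T : X → X}
    (hT : Measurable T) {B : Set X} (hB : MeasurableSet B) (k : ℕ) :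
    MeasurableSet {x | (k : ℕ∞) < hitTime T B x} := by
  have heq : {x | (k : ℕ∞) < hitTime T B x} = ⋂ j ∈ Set.Icc 1 k, (T^[j]) ⁻¹' Bᶜ := by
    ext x
    simp only [mem_ofPred_eq, lt_hitTime_iff, mem_iInter, mem_preimage, mem_compl_iff]
  rw [heq]
  exact MeasurableSet.biInter (Set.to_countable _) fun j _ => (hT.iterate j) hB.compl

theorem measurableSet_shadow {X : Type*} [MeasurableSpace X] {T : X → X}
    (hT : Measurable T) {A E : Set X} (hA : MeasurableSet A) (hE : MeasurableSet E) :
    MeasurableSet (shadow T A E) :=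
  MeasurableSet.iUnion fun k =>
    (hA.inter (measurableSet_lt_hitTime hT hA k)).inter ((hT.iterate k) hE)

/-- Points of the shadow of a set `E` disjoint from `A` enter `E` before they return to `A`. -/
theorem hitTime_lt_hitTime_of_mem_shadow {X : Type*} {T : X → X} {A E : Set X}
    (hEA : Disjoint E A) {x : X} (hx : x ∈ shadow T A E) :
    x ∈ A ∧ hitTime T E x < hitTime T A x := by
  obtain ⟨k, ⟨hxA, hk⟩, hkE⟩ := mem_iUnion.1 hx
  have hk1 : 1 ≤ k := by
    rcases Nat.eq_zero_or_pos k with rfl | h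
    · exact absurd hxA (Set.disjoint_left.1 hEA hkE)
    · exact h
  refine ⟨hxA, lt_of_le_of_lt (not_lt.1 fun h => ?_) hk⟩
  exact (lt_hitTime_iff T E x k).1 h k ⟨hk1, le_rfl⟩ hkE

/-- The conditional probability, given the shadow of `E`, that `E` is not reached before time
`s` is controlled by the tail of the return time to `A`. -/
theorem cond_shadow_le_hitTime_le {X : Type*} [MeasurableSpace X] {T : X → X}
    (hT : Measurable T) (μ : Measure X) {A E : Set X} (hA : MeasurableSet A)
    (hE : MeasurableSet E) (hEA : Disjoint E A) {s : ℝ≥0∞} {N : ℕ} (hN : (N : ℝ≥0∞) ≤ s) :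
    μ[|shadow T A E] {x | s ≤ (hitTime T E x : ℝ≥0∞)} ≤
      (μ (shadow T A E))⁻¹ * μ (A ∩ {x | (N : ℕ∞) < hitTime T A x}) := by
  rw [cond_apply (measurableSet_shadow hT hA hE)]
  refine mul_le_mul_right (measure_mono ?_) _
  rintro x ⟨hx, hxs⟩
  obtain ⟨hxA, hlt⟩ := hitTime_lt_hitTime_of_mem_shadow hEA hx
  refine ⟨hxA, lt_of_le_of_lt ?_ hlt⟩
  have hle : (((N : ℕ∞)) : ℝ≥0∞) ≤ (hitTime T E x : ℝ≥0∞) := by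
    rw [ENat.toENNReal_coe]
    exact hN.trans hxs
  exact ENat.toENNReal_le.1 hle

/-- If the return time to `A` has exponential tails
(`μ(A ∩ {r_A > t}) ≤ C η^t`) and `(E_n)` are sets disjoint from `A` whose shadows `E'_n`
have positive measure tending to `0`, then `μ(E'_n)·r_{E_n} → 0` in
`μ_{E'_n}`-probability. -/
theorem statement8 {X : Type*} [MetricSpace X] [MeasurableSpace X] [BorelSpace X]
    (T : X → X) (μ : Measure X) [IsProbabilityMeasure μ] (hErg : Ergodic T μ)
    (A : Set X) (hA : MeasurableSet A) (hApos : 0 < μ A)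
    (C : ℝ) (hC : 0 < C) (η : ℝ) (hη0 : 0 < η) (hη1 : η < 1)
    (htail : ∀ t : ℕ, μ (A ∩ {x | (t : ℕ∞) < hitTime T A x}) ≤ ENNReal.ofReal (C * η ^ t))
    (E : ℕ → Set X) (hE : ∀ n, MeasurableSet (E n)) (hEA : ∀ n, Disjoint (E n) A)
    (hpos : ∀ n, 0 < μ (shadow T A (E n)))
    (h0 : Tendsto (fun n => μ (shadow T A (E n))) atTop (𝓝 0)) :
    ∀ ε : ℝ, 0 < ε →
      Tendsto (fun n => μ[|shadow T A (E n)]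
        {x | ENNReal.ofReal ε / μ (shadow T A (E n)) ≤ (hitTime T (E n) x : ℝ≥0∞)})
        atTop (𝓝 0) := by
  intro ε hε
  set m : ℕ → ℝ := fun n => (μ (shadow T A (E n))).toReal with hm
  have hμm : ∀ n, μ (shadow T A (E n)) = ENNReal.ofReal (m n) := fun n =>
    (ENNReal.ofReal_toReal (measure_ne_top μ _)).symm
  have hmpos : ∀ n, 0 < m n := fun n =>
    ENNReal.toReal_pos (hpos n).ne' (measure_ne_top μ _)
  have hm0 : Tendsto m atTop (𝓝[>] 0) :=
    tendsto_nhdsWithin_iff.2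
      ⟨(ENNReal.tendsto_toReal ENNReal.zero_ne_top).comp h0, Eventually.of_forall hmpos⟩
  set N : ℕ → ℕ := fun n => ⌊ε / m n⌋₊ with hNdef
  have hNtop : Tendsto N atTop atTop := by
    refine tendsto_nat_floor_atTop.comp ?_
    simpa only [div_eq_mul_inv, Function.comp_def] using (tendsto_inv_nhdsGT_zero.comp hm0).const_mul_atTop hε
  have hlim : Tendsto (fun n => ENNReal.ofReal (C / ε * ((N n : ℝ) * η ^ N n + η ^ N n)))
      atTop (𝓝 0) := by
    have hgeom : Tendsto (fun k : ℕ => C / ε * ((k : ℝ) * η ^ k + η ^ k)) atTop (𝓝 0) := by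
      simpa using ((tendsto_self_mul_const_pow_of_lt_one hη0.le hη1).add
        (tendsto_pow_atTop_nhds_zero_of_lt_one hη0.le hη1)).const_mul (C / ε)
    simpa using ENNReal.tendsto_ofReal (hgeom.comp hNtop)
  refine tendsto_of_tendsto_of_tendsto_of_le_of_le tendsto_const_nhds hlim
    (fun _ => zero_le) fun n => ?_
  have hNle : (N n : ℝ≥0∞) ≤ ENNReal.ofReal ε / μ (shadow T A (E n)) := by
    rw [hμm, ← ENNReal.ofReal_div_of_pos (hmpos n), ← ENNReal.ofReal_natCast]
    exact ENNReal.ofReal_le_ofReal (Nat.floor_le (div_pos hε (hmpos n)).le)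
  have hinv : (m n)⁻¹ ≤ (N n + 1) / ε := by
    rw [le_div_iff₀ hε, inv_mul_eq_div]
    exact (Nat.lt_floor_add_one _).le
  calc _ ≤ (μ (shadow T A (E n)))⁻¹ * μ (A ∩ {x | (N n : ℕ∞) < hitTime T A x}) :=
        cond_shadow_le_hitTime_le hErg.measurable μ hA (hE n) (hEA n) hNle
    _ ≤ ENNReal.ofReal (m n)⁻¹ * ENNReal.ofReal (C * η ^ N n) := by
        rw [hμm, ENNReal.ofReal_inv_of_pos (hmpos n)]
        gcongr
        exact htail (N n)
    _ = ENNReal.ofReal ((m n)⁻¹ * (C * η ^ N n)) :=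
        (ENNReal.ofReal_mul (inv_pos.2 (hmpos n)).le).symm
    _ ≤ ENNReal.ofReal ((N n + 1) / ε * (C * η ^ N n)) := by gcongr
    _ = ENNReal.ofReal (C / ε * ((N n : ℝ) * η ^ N n + η ^ N n)) := by
        congr 1
        ring
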